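/- Let α : [0,∞) → [1,∞) and β : [0,∞) → [0,1) be such that β has property (MT), and suppose there is a bounded function γ : (0,1] → [0,∞) with lim_{s→0⁺} γ(s) = 0 such that p(s) = s − (1−s)·γ(s) is essentially positive on (0,1] and α(t) ≤ 1 + γ(1−β(t)) for all t ≥ 0. Then the product t ↦ α(t)·β(t) has property (MT), i.e. limsup_{s→t⁺} α(s)·β(s) < 1 for every t ≥ 0. -/

import Mathlib

/-!
Put `p s = s - (1 - s) * γ s`. Multiplying `α ≤ 1 + γ (1 - β)` by `β ≥ 0` gives
`α * β ≤ 1 - p (1 - β)`. If `β` stays below some `c < 1`, then `1 - β ≥ 1 - c > 0`, so essential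
positivity keeps `p (1 - β)` above some `m > 0`, and `α * β` stays below `1 - m`.
-/

section

open Filter Set

/-- Essential positivity of `h` on `S`: for every `a > 0`, the values of `h` on `S ∩ [a, ∞)` are
bounded below by a positive constant. This avoids `sInf`, whose value on `∅ : Set ℝ` is `0`. -/
def EssentiallyPositiveOn (h : ℝ → ℝ) (S : Set ℝ) : Prop :=
  ∀ a > 0, ∃ m > 0, ∀ s ∈ S, a ≤ s → m ≤ h s

theorem limsup_lt_iff_exists_eventually_le {ι R : Type*} [ConditionallyCompleteLinearOrder R]
    {l : Filter ι} {u : ι → R} {b : R}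
    (hbdd : l.IsBoundedUnder (· ≤ ·) u) (hcobdd : l.IsCoboundedUnder (· ≤ ·) u) :
    limsup u l < b ↔ ∃ c < b, ∀ᶠ i in l, u i ≤ c := by
  constructor
  · intro hlt
    by_cases hbetween : ∃ c, limsup u l < c ∧ c < b
    · obtain ⟨c, hc, hcb⟩ := hbetween
      exact ⟨c, hcb, (eventually_lt_of_limsup_lt hc hbdd).mono fun _ hi => hi.le⟩
    · exact ⟨limsup u l, hlt, (eventually_lt_of_limsup_lt hlt hbdd).mono fun i hi =>
        not_lt.mp fun hui => hbetween ⟨u i, hui, hi⟩⟩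
  · rintro ⟨c, hcb, hc⟩
    exact (limsup_le_of_le hcobdd hc).trans_lt hcb

theorem EssentiallyPositiveOn.exists_eventually_le_comp {ι : Type*} {l : Filter ι} {h : ℝ → ℝ}
    {S : Set ℝ} (hh : EssentiallyPositiveOn h S) {u : ι → ℝ} {a : ℝ} (ha : 0 < a)
    (huS : ∀ᶠ i in l, u i ∈ S) (hau : ∀ᶠ i in l, a ≤ u i) :
    ∃ m > 0, ∀ᶠ i in l, m ≤ h (u i) := by
  obtain ⟨m, hm, hmh⟩ := hh a ha
  exact ⟨m, hm, by filter_upwards [huS, hau] with i using hmh (u i)⟩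

-- The right-hand side is `1 - p (1 - b)` for `p s = s - (1 - s) * c`.
theorem mul_le_one_sub_of_le_one_add {R : Type*} [CommRing R] [PartialOrder R] [IsOrderedRing R]
    {a b c : R} (hb : 0 ≤ b) (h : a ≤ 1 + c) :
    a * b ≤ 1 - ((1 - b) - (1 - (1 - b)) * c) :=
  calc a * b ≤ (1 + c) * b := mul_le_mul_of_nonneg_right h hb
    _ = 1 - ((1 - b) - (1 - (1 - b)) * c) := by ring

theorem product_has_MT_property_general {ι : Type*} {l : Filter ι} [l.NeBot] {α β : ι → ℝ}
    {γ : ℝ → ℝ} (hα : ∀ᶠ i in l, 0 ≤ α i) (hβ : ∀ᶠ i in l, β i ∈ Ico 0 1)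
    (hlimsup : limsup β l < 1)
    (hp : EssentiallyPositiveOn (fun s => s - (1 - s) * γ s) (Ioc 0 1))
    (hαγ : ∀ᶠ i in l, α i ≤ 1 + γ (1 - β i)) :
    limsup (fun i => α i * β i) l < 1 := by
  have hβ_le : l.IsBoundedUnder (· ≤ ·) β :=
    isBoundedUnder_of_eventually_le (hβ.mono fun _ hi => hi.2.le)
  have hβ_ge : l.IsBoundedUnder (· ≥ ·) β :=
    isBoundedUnder_of_eventually_ge (hβ.mono fun _ hi => hi.1)
  obtain ⟨c, hc, hβc⟩ :=
    (limsup_lt_iff_exists_eventually_le hβ_le hβ_ge.isCoboundedUnder_le).mp hlimsup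
  obtain ⟨m, hm, hmp⟩ := hp.exists_eventually_le_comp (sub_pos.mpr hc)
    (hβ.mono fun _ hi => ⟨sub_pos.mpr hi.2, sub_le_self 1 hi.1⟩)
    (hβc.mono fun _ hi => sub_le_sub_left hi 1)
  have hαβ_le : ∀ᶠ i in l, α i * β i ≤ 1 - m := by
    filter_upwards [hβ, hαγ, hmp] with i hβi hαγi hmi
    exact (mul_le_one_sub_of_le_one_add hβi.1 hαγi).trans (sub_le_sub_left hmi 1)
  have hαβ_ge : l.IsBoundedUnder (· ≥ ·) fun i => α i * β i :=
    isBoundedUnder_of_eventually_ge (hα.and hβ |>.mono fun _ hi => mul_nonneg hi.1 hi.2.1)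
  exact (limsup_lt_iff_exists_eventually_le (isBoundedUnder_of_eventually_le hαβ_le)
    hαβ_ge.isCoboundedUnder_le).mpr ⟨1 - m, sub_lt_self 1 hm, hαβ_le⟩

end

/-- **Lemma 2.1.** Under the hypotheses of Theorem 1.4 on `α`, `β` and `γ`, the product
`t ↦ α t * β t` has the Mizoguchi–Takahashi property:
`limsup_{s→t⁺} α(s)β(s) < 1` for every `t ≥ 0`. -/
theorem product_has_MT_property
    (α β : ℝ → ℝ)
    (hα : ∀ t, 0 ≤ t → 1 ≤ α t)
    (hβ : ∀ t, 0 ≤ t → β t ∈ Set.Ico (0 : ℝ) 1)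
    -- β has property (MT)
    (hMT : ∀ t, 0 ≤ t → Filter.limsup β (nhdsWithin t (Set.Ioi t)) < 1)
    -- the control function γ
    (γ : ℝ → ℝ)
    (hγnonneg : ∀ s ∈ Set.Ioc (0 : ℝ) 1, 0 ≤ γ s)
    (hγbdd : ∃ M : ℝ, ∀ s ∈ Set.Ioc (0 : ℝ) 1, γ s ≤ M)
    (hγlim : Filter.Tendsto γ (nhdsWithin 0 (Set.Ioc (0 : ℝ) 1)) (nhds 0))
    -- p(s) = s - (1-s)γ(s) is essentially positive on (0,1]
    (hp : ∀ a > (0 : ℝ), ∃ m > (0 : ℝ), ∀ s ∈ Set.Ioc (0 : ℝ) 1, a ≤ s →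
      m ≤ s - (1 - s) * γ s)
    (hαγ : ∀ t, 0 ≤ t → α t ≤ 1 + γ (1 - β t)) :
    ∀ t, 0 ≤ t →
      Filter.limsup (fun s => α s * β s) (nhdsWithin t (Set.Ioi t)) < 1 := by
  intro t ht
  have hnonneg : ∀ᶠ s in nhdsWithin t (Set.Ioi t), 0 ≤ s :=
    eventually_mem_nhdsWithin.mono fun _ hs => ht.trans (le_of_lt hs)
  exact product_has_MT_property_general (hnonneg.mono fun s hs => zero_le_one.trans (hα s hs))
    (hnonneg.mono hβ) (hMT t ht) hp (hnonneg.mono hαγ)
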